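/- For every integer m ≥ 1, the quantum Gelfand invariant tr_q M^m = tr(D·M^m) belongs to the center of the quantized enveloping algebra U_q(gl_n); that is, it commutes with every element of U_q(gl_n). -/

import Mathlib

open Matrix

noncomputable section

/-- The `R`-matrix of `U_q(gl_n)` as an `n²×n²` matrix. -/
def Rmat (q : ℂ) (n : ℕ) : Matrix (Fin n × Fin n) (Fin n × Fin n) ℂ :=
  fun p r =>
    (if p = r then (if p.1 = p.2 then q else 1) else 0) +
      (if r.1 = p.2 ∧ r.2 = p.1 ∧ p.1 < p.2 then q - q⁻¹ else 0)

/-- Generators of `U_q(gl_n)`: a sign (`true` for `+`) and a pair of indices. -/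
abbrev GenGL (n : ℕ) := Bool × Fin n × Fin n

/-- The generator `l^±_{ij}` in the free algebra. -/
def gl (n : ℕ) (p : Bool) (i j : Fin n) : FreeAlgebra ℂ (GenGL n) :=
  FreeAlgebra.ι ℂ (p, i, j)

/-- Embedding of an `n×n` matrix into the first tensor leg of `End(ℂ^n)⊗End(ℂ^n)`. -/
def leg1 {n : ℕ} {A : Type*} [Semiring A] (m : Fin n → Fin n → A) :
    Matrix (Fin n × Fin n) (Fin n × Fin n) A :=
  fun v w => if v.2 = w.2 then m v.1 w.1 else 0

/-- Embedding of an `n×n` matrix into the second tensor leg of `End(ℂ^n)⊗End(ℂ^n)`. -/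
def leg2 {n : ℕ} {A : Type*} [Semiring A] (m : Fin n → Fin n → A) :
    Matrix (Fin n × Fin n) (Fin n × Fin n) A :=
  fun v w => if v.1 = w.1 then m v.2 w.2 else 0

/-- The `R`-matrix with entries in the free algebra. -/
def RcGL (q : ℂ) (n : ℕ) : Matrix (Fin n × Fin n) (Fin n × Fin n) (FreeAlgebra ℂ (GenGL n)) :=
  (Rmat q n).map (algebraMap ℂ (FreeAlgebra ℂ (GenGL n)))

/-- The defining relations of `U_q(gl_n)` in its `RTT` presentation. -/
inductive relGL (q : ℂ) (n : ℕ) :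
    FreeAlgebra ℂ (GenGL n) → FreeAlgebra ℂ (GenGL n) → Prop
  | tri_minus {i j : Fin n} : i < j → relGL q n (gl n false i j) 0
  | tri_plus {i j : Fin n} : i < j → relGL q n (gl n true j i) 0
  | diag_mp (i : Fin n) : relGL q n (gl n false i i * gl n true i i) 1
  | diag_pm (i : Fin n) : relGL q n (gl n true i i * gl n false i i) 1
  | rll (p : Bool) (v w : Fin n × Fin n) :
      relGL q n
        ((RcGL q n * leg1 (gl n p) * leg2 (gl n p)) v w)
        ((leg2 (gl n p) * leg1 (gl n p) * RcGL q n) v w)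
  | rll_pm (v w : Fin n × Fin n) :
      relGL q n
        ((RcGL q n * leg1 (gl n true) * leg2 (gl n false)) v w)
        ((leg2 (gl n false) * leg1 (gl n true) * RcGL q n) v w)

/-- The quantized enveloping algebra `U_q(gl_n)` in its `RTT` presentation. -/
abbrev UqGL (q : ℂ) (n : ℕ) := RingQuot (relGL q n)

/-- The generator `l^±_{ij}` of `U_q(gl_n)`. -/
def lG (q : ℂ) (n : ℕ) (p : Bool) (i j : Fin n) : UqGL q n :=
  RingQuot.mkAlgHom ℂ (relGL q n) (gl n p i j)

/-- The generator matrix `L^± = [l^±_{ij}]`. -/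
def LM (q : ℂ) (n : ℕ) (p : Bool) : Matrix (Fin n) (Fin n) (UqGL q n) :=
  fun i j => lG q n p i j

/-- The diagonal matrix `D = diag(q^{n−1}, q^{n−3}, …, q^{−n+1})` over `A`. -/
def Dmat (q : ℂ) (n : ℕ) (A : Type*) [Ring A] [Algebra ℂ A] : Matrix (Fin n) (Fin n) A :=
  Matrix.diagonal fun i => algebraMap ℂ A (q ^ ((n : ℤ) - 1 - 2 * (i : ℤ)))

/-- The inverse diagonal matrix `D⁻¹`. -/
def Dmatinv (q : ℂ) (n : ℕ) (A : Type*) [Ring A] [Algebra ℂ A] : Matrix (Fin n) (Fin n) A :=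
  Matrix.diagonal fun i => algebraMap ℂ A (q ^ (-((n : ℤ) - 1 - 2 * (i : ℤ))))

/-- Quantum trace `tr_q X = tr(D X)`. -/
def trq {n : ℕ} {A : Type*} [Ring A] [Algebra ℂ A] (q : ℂ) (X : Matrix (Fin n) (Fin n) A) : A :=
  Matrix.trace (Dmat q n A * X)

/-- The `q`-number `[k]_q`. -/
def qint (q : ℂ) (k : ℤ) : ℂ := (q ^ k - q ^ (-k)) / (q - q⁻¹)

end

/-!
Over a `ℂ`-algebra, the exchange relations and the invertibility of `R` say that `L⁻(L⁺)⁻¹`, placed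
in the first leg, commutes with `R⁻¹ L⁻₂` and with `R₂₁ L⁺₂`; hence so do its powers `Y`. Thus
`R Y₁ R⁻¹ L⁻₂ = L⁻₂ Y₁` and `R₂₁⁻¹ Y₁ R₂₁ L⁺₂ = L⁺₂ Y₁`. Now take the trace over the first leg with
weight `D`. The right-hand sides become `L^± tr(DY)`, and the left-hand sides `tr(DY) L^±`, because
conjugation by `R` does not change the `D`-weighted partial trace of `Y₁`. This invariance amounts
to `R^{t₁} D₁ (R⁻¹)^{t₁} = D₁`, which fixes the powers of `q` in `D`: the partial transpose `R^{t₁}`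
is the identity away from the span of the vectors `e_i ⊗ e_i`, on which it is triangular.
-/

section Legs

variable {n : ℕ} {A : Type*} [Semiring A]

/-- `leg1` as a ring homomorphism. -/
def leg1Hom : Matrix (Fin n) (Fin n) A →+* Matrix (Fin n × Fin n) (Fin n × Fin n) A :=
  (blockDiagonalRingHom (Fin n) (Fin n) A).comp (Pi.constRingHom (Fin n) _)

theorem leg1_mul (X Y : Matrix (Fin n) (Fin n) A) : leg1 (X * Y) = leg1 X * leg1 Y :=
  map_mul leg1Hom X Y

theorem leg1_pow (X : Matrix (Fin n) (Fin n) A) (m : ℕ) : leg1 (X ^ m) = leg1 X ^ m :=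
  map_pow leg1Hom X m

theorem leg1_diagonal (d : Fin n → A) : leg1 (diagonal d) = diagonal fun v => d v.1 :=
  blockDiagonal_diagonal fun _ => d

theorem leg1_transpose (X : Matrix (Fin n) (Fin n) A) : leg1 Xᵀ = (leg1 X)ᵀ :=
  (blockDiagonal_transpose fun _ => X).symm

theorem leg1_submatrix_swap (X : Matrix (Fin n) (Fin n) A) :
    (leg1 X).submatrix Prod.swap Prod.swap = leg2 X := rfl

theorem leg2_submatrix_swap (X : Matrix (Fin n) (Fin n) A) :
    (leg2 X).submatrix Prod.swap Prod.swap = leg1 X := rfl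

theorem mul_leg2_apply {ι : Type*} (X : Matrix ι (Fin n × Fin n) A)
    (L : Matrix (Fin n) (Fin n) A) (v : ι) (w : Fin n × Fin n) :
    (X * leg2 L) v w = ∑ j, X v (w.1, j) * L j w.2 := by
  simp [Matrix.mul_apply, leg2, Fintype.sum_prod_type_right]

theorem leg2_mul_apply {ι : Type*} (L : Matrix (Fin n) (Fin n) A)
    (X : Matrix (Fin n × Fin n) ι A) (v : Fin n × Fin n) (w : ι) :
    (leg2 L * X) v w = ∑ j, L v.2 j * X (v.1, j) w := by
  simp [Matrix.mul_apply, leg2, Fintype.sum_prod_type_right]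

theorem commute_leg1_map_leg2 {K : Type*} [CommSemiring K] [Algebra K A]
    (D : Matrix (Fin n) (Fin n) K) (L : Matrix (Fin n) (Fin n) A) :
    Commute (leg1 (D.map (algebraMap K A))) (leg2 L) := by
  ext v w
  simp [mul_leg2_apply, leg2_mul_apply, leg1, Algebra.commutes]

end Legs

section PartialTrace

variable {n : ℕ} {A : Type*} [Semiring A]

/-- The partial trace `tr₁` over the first tensor leg. -/
def partialTrace₁ (X : Matrix (Fin n × Fin n) (Fin n × Fin n) A) : Matrix (Fin n) (Fin n) A :=
  of fun i k => ∑ a, X (a, i) (a, k)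

theorem partialTrace₁_apply (X : Matrix (Fin n × Fin n) (Fin n × Fin n) A) (i k : Fin n) :
    partialTrace₁ X i k = ∑ a, X (a, i) (a, k) := rfl

theorem partialTrace₁_leg1 (X : Matrix (Fin n) (Fin n) A) :
    partialTrace₁ (leg1 X) = scalar (Fin n) X.trace := by
  ext i k
  rw [partialTrace₁_apply, scalar_apply, diagonal_apply]
  by_cases h : i = k <;> simp [leg1, Matrix.trace, h]

theorem partialTrace₁_mul_leg2 (X : Matrix (Fin n × Fin n) (Fin n × Fin n) A)
    (L : Matrix (Fin n) (Fin n) A) : partialTrace₁ (X * leg2 L) = partialTrace₁ X * L := by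
  ext i k
  rw [Matrix.mul_apply]
  simp only [partialTrace₁_apply, mul_leg2_apply, Finset.sum_mul]
  exact Finset.sum_comm

theorem partialTrace₁_leg2_mul (L : Matrix (Fin n) (Fin n) A)
    (X : Matrix (Fin n × Fin n) (Fin n × Fin n) A) :
    partialTrace₁ (leg2 L * X) = L * partialTrace₁ X := by
  ext i k
  rw [Matrix.mul_apply]
  simp only [partialTrace₁_apply, leg2_mul_apply, Finset.mul_sum]
  exact Finset.sum_comm

end PartialTrace

section PartialTranspose

variable {n : ℕ} {K : Type*}

/-- The partial transpose `X^{t₁}` in the first tensor leg. -/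
def partialTranspose₁ (X : Matrix (Fin n × Fin n) (Fin n × Fin n) K) :
    Matrix (Fin n × Fin n) (Fin n × Fin n) K :=
  of fun v w => X (w.1, v.2) (v.1, w.2)

theorem partialTranspose₁_transpose (X : Matrix (Fin n × Fin n) (Fin n × Fin n) K) :
    partialTranspose₁ Xᵀ = (partialTranspose₁ X)ᵀ := rfl

end PartialTranspose

section CrossingUnitary

variable {n : ℕ} {K A : Type*} [CommSemiring K] [Semiring A] [Algebra K A]

/-- Crossing unitarity `S^{t₁} Dᵀ₁ T^{t₁} = Dᵀ₁` of two `n²×n²` matrices with respect to a weight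
`D`. It expresses that `tr₁(D₁ S Y₁ T) = tr(D Y) · 1` for all `n×n` matrices `Y`. -/
def CrossingUnitary (D : Matrix (Fin n) (Fin n) K)
    (S T : Matrix (Fin n × Fin n) (Fin n × Fin n) K) : Prop :=
  partialTranspose₁ S * leg1 Dᵀ * partialTranspose₁ T = leg1 Dᵀ

theorem CrossingUnitary.transpose {D : Matrix (Fin n) (Fin n) K}
    {S T : Matrix (Fin n × Fin n) (Fin n × Fin n) K} (h : CrossingUnitary D S T) :
    CrossingUnitary Dᵀ Tᵀ Sᵀ := by
  simpa [CrossingUnitary, partialTranspose₁_transpose, leg1_transpose, Matrix.mul_assoc]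
    using congrArg Matrix.transpose h

theorem partialTranspose₁_leg1_mul (D : Matrix (Fin n) (Fin n) K)
    (S : Matrix (Fin n × Fin n) (Fin n × Fin n) K) :
    partialTranspose₁ (leg1 D * S) = partialTranspose₁ S * leg1 Dᵀ := by
  ext v w
  simp [partialTranspose₁, leg1, Matrix.mul_apply, Fintype.sum_prod_type, mul_comm]

theorem map_mul_leg1_mul_map_apply (S T : Matrix (Fin n × Fin n) (Fin n × Fin n) K)
    (Y : Matrix (Fin n) (Fin n) A) (v w : Fin n × Fin n) :
    (S.map (algebraMap K A) * leg1 Y * T.map (algebraMap K A)) v w =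
      ∑ b, ∑ c, ∑ j, (S v (b, j) * T (c, j) w) • Y b c := by
  have hentry (b c j : Fin n) :
      algebraMap K A (S v (b, j)) * Y b c * algebraMap K A (T (c, j) w) =
        (S v (b, j) * T (c, j) w) • Y b c := by
    rw [mul_assoc, ← Algebra.commutes, ← Algebra.smul_def, ← Algebra.smul_def, smul_smul]
  simp only [Matrix.mul_apply, leg1, Fintype.sum_prod_type, mul_ite, mul_zero, Matrix.map_apply,
    Finset.sum_ite_eq', Finset.mem_univ, if_true, Finset.sum_mul, hentry]
  rw [Finset.sum_congr rfl fun c _ => Finset.sum_comm, Finset.sum_comm]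

theorem partialTrace₁_map_mul_leg1_mul_map_apply (S T : Matrix (Fin n × Fin n) (Fin n × Fin n) K)
    (Y : Matrix (Fin n) (Fin n) A) (i k : Fin n) :
    partialTrace₁ (S.map (algebraMap K A) * leg1 Y * T.map (algebraMap K A)) i k =
      ∑ b, ∑ c, (partialTranspose₁ S * partialTranspose₁ T) (b, i) (c, k) • Y b c := by
  simp only [partialTrace₁_apply, map_mul_leg1_mul_map_apply]
  simp only [Matrix.mul_apply, partialTranspose₁, of_apply, Fintype.sum_prod_type, Finset.sum_smul]
  rw [Finset.sum_comm, Finset.sum_congr rfl fun b _ => Finset.sum_comm]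

theorem CrossingUnitary.partialTrace₁_conj {D : Matrix (Fin n) (Fin n) K}
    {S T : Matrix (Fin n × Fin n) (Fin n × Fin n) K} (h : CrossingUnitary D S T)
    (Y : Matrix (Fin n) (Fin n) A) :
    partialTrace₁ (leg1 (D.map (algebraMap K A)) *
        (S.map (algebraMap K A) * leg1 Y * T.map (algebraMap K A))) =
      scalar (Fin n) (D.map (algebraMap K A) * Y).trace := by
  ext i k
  have hmap : leg1 (D.map (algebraMap K A)) * S.map (algebraMap K A) =
      (leg1 D * S).map (algebraMap K A) := by
    rw [Matrix.map_mul]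
    congr 1
    ext v w
    simp [leg1, apply_ite (algebraMap K A)]
  rw [mul_assoc, ← mul_assoc, hmap, ← mul_assoc, partialTrace₁_map_mul_leg1_mul_map_apply,
    partialTranspose₁_leg1_mul, h, scalar_apply, diagonal_apply, Matrix.trace]
  simp only [diag_apply, Matrix.mul_apply, Matrix.map_apply, ← Algebra.smul_def]
  rw [Finset.sum_comm]
  by_cases hik : i = k <;> simp [leg1, hik]

theorem CrossingUnitary.commute_trace_mul {D : Matrix (Fin n) (Fin n) K}
    {S T : Matrix (Fin n × Fin n) (Fin n × Fin n) K} (h : CrossingUnitary D S T)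
    (hST : S * T = 1) {Y L : Matrix (Fin n) (Fin n) A}
    (hY : Commute (leg1 Y) (T.map (algebraMap K A) * leg2 L)) (i k : Fin n) :
    Commute (D.map (algebraMap K A) * Y).trace (L i k) := by
  set D' := D.map (algebraMap K A)
  set S' := S.map (algebraMap K A)
  set T' := T.map (algebraMap K A)
  have hST' : S' * T' = 1 := by
    simpa using congrArg (algebraMap K A).mapMatrix hST
  have hconj : S' * leg1 Y * T' * leg2 L = leg2 L * leg1 Y := by
    rw [mul_assoc, mul_assoc, hY.eq, ← mul_assoc, ← mul_assoc, hST', one_mul]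
  have hcomm : Commute (scalar (Fin n) (D' * Y).trace) L := by
    calc scalar (Fin n) (D' * Y).trace * L
        = partialTrace₁ (leg1 D' * (S' * leg1 Y * T' * leg2 L)) := by
          rw [← h.partialTrace₁_conj, ← partialTrace₁_mul_leg2, mul_assoc]
      _ = partialTrace₁ (leg2 L * leg1 (D' * Y)) := by
          rw [hconj, ← mul_assoc, (commute_leg1_map_leg2 D L).eq, mul_assoc, leg1_mul]
      _ = L * scalar (Fin n) (D' * Y).trace := by
          rw [partialTrace₁_leg2_mul, partialTrace₁_leg1]
  exact congrFun₂ (scalar_commute_iff.mp hcomm) i k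

end CrossingUnitary

section RTTRelation

variable {n : ℕ} {K A : Type*} [CommSemiring K] [Semiring A] [Algebra K A]

/-- The exchange relation `R L₁ L'₂ = L'₂ L₁ R` between two matrices over a `K`-algebra. -/
def RTTRelation (R : Matrix (Fin n × Fin n) (Fin n × Fin n) K) (L L' : Matrix (Fin n) (Fin n) A) :
    Prop :=
  R.map (algebraMap K A) * leg1 L * leg2 L' = leg2 L' * leg1 L * R.map (algebraMap K A)

variable {R R' : Matrix (Fin n × Fin n) (Fin n × Fin n) K} {L L' : Matrix (Fin n) (Fin n) A}

theorem RTTRelation.semiconjBy_inv (h : RTTRelation R L L') (hR : R * R' = 1) :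
    SemiconjBy (leg1 L) (leg2 L' * R'.map (algebraMap K A))
      (R'.map (algebraMap K A) * leg2 L') := by
  let u : (Matrix (Fin n × Fin n) (Fin n × Fin n) A)ˣ :=
    Units.map (algebraMap K A).mapMatrix.toMonoidHom ⟨R, R', hR, mul_eq_one_comm.mp hR⟩
  have hu : SemiconjBy (u : Matrix (Fin n × Fin n) (Fin n × Fin n) A)
      (leg1 L * leg2 L') (leg2 L' * leg1 L) := (mul_assoc _ _ _).symm.trans h
  have hinv := hu.units_inv_symm_left.eq
  simp only [mul_assoc] at hinv
  exact ((mul_assoc _ _ _).trans hinv).symm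

theorem RTTRelation.semiconjBy_swap (h : RTTRelation R L L') :
    SemiconjBy (leg1 L') (leg2 L * (R.submatrix Prod.swap Prod.swap).map (algebraMap K A))
      ((R.submatrix Prod.swap Prod.swap).map (algebraMap K A) * leg2 L) := by
  have hswap := congrArg (fun X => X.submatrix Prod.swap Prod.swap) h
  simp only [submatrix_mul _ _ _ _ _ Prod.swap_bijective, leg1_submatrix_swap, leg2_submatrix_swap,
    submatrix_map] at hswap
  exact (mul_assoc _ _ _).symm.trans hswap.symm

theorem commute_leg1_mul_inv_pow {P : (Matrix (Fin n) (Fin n) A)ˣ} {N : Matrix (Fin n) (Fin n) A}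
    {X Z : Matrix (Fin n × Fin n) (Fin n × Fin n) A} (hP : SemiconjBy (leg1 P.val) Z X)
    (hN : SemiconjBy (leg1 N) Z X) (m : ℕ) :
    Commute (leg1 ((N * P⁻¹.val) ^ m)) X := by
  have hPinv : SemiconjBy (leg1 P⁻¹.val) X Z :=
    SemiconjBy.units_inv_symm_left (a := Units.map (leg1Hom (A := A)).toMonoidHom P) hP
  have hM : Commute (leg1 (N * P⁻¹.val)) X := by
    rw [leg1_mul]
    exact hN.mul_left hPinv
  rw [leg1_pow]
  exact hM.pow_left m

variable {D : Matrix (Fin n) (Fin n) K} {P : (Matrix (Fin n) (Fin n) A)ˣ}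
  {N : Matrix (Fin n) (Fin n) A}

theorem commute_trace_mul_inv_pow_left (hR : R * R' = 1) (hD : CrossingUnitary D R R')
    (hPN : RTTRelation R P.val N) (hNN : RTTRelation R N N) (m : ℕ) (i k : Fin n) :
    Commute (D.map (algebraMap K A) * (N * P⁻¹.val) ^ m).trace (N i k) :=
  hD.commute_trace_mul hR
    (commute_leg1_mul_inv_pow (hPN.semiconjBy_inv hR) (hNN.semiconjBy_inv hR) m) i k

theorem commute_trace_mul_inv_pow_right (hR : R * R' = 1)
    (hD : CrossingUnitary D (R'.submatrix Prod.swap Prod.swap) (R.submatrix Prod.swap Prod.swap))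
    (hPP : RTTRelation R P.val P.val) (hPN : RTTRelation R P.val N) (m : ℕ) (i k : Fin n) :
    Commute (D.map (algebraMap K A) * (N * P⁻¹.val) ^ m).trace (P.val i k) := by
  refine hD.commute_trace_mul ?_
    (commute_leg1_mul_inv_pow hPP.semiconjBy_swap hPN.semiconjBy_swap m) i k
  rw [← submatrix_mul _ _ _ _ _ Prod.swap_bijective, mul_eq_one_comm.mp hR,
    submatrix_one _ Prod.swap_injective]

end RTTRelation

section ExtendDiag

variable {n : ℕ} {K : Type*} [Semiring K]

/-- The `n²×n²` matrix acting as `B` on the span of the vectors `e_i ⊗ e_i`, and as the identity on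
the other `e_i ⊗ e_j`. -/
def extendDiag (B : Matrix (Fin n) (Fin n) K) : Matrix (Fin n × Fin n) (Fin n × Fin n) K :=
  of fun v w => if v.1 = v.2 ∧ w.1 = w.2 then B v.1 w.1 else if v = w then 1 else 0

theorem extendDiag_mul_apply {ι : Type*} (B : Matrix (Fin n) (Fin n) K)
    (X : Matrix (Fin n × Fin n) ι K) (v : Fin n × Fin n) (w : ι) :
    (extendDiag B * X) v w = if v.1 = v.2 then ∑ a, B v.1 a * X (a, a) w else X v w := by
  by_cases hv : v.1 = v.2
  · rw [if_pos hv, Matrix.mul_apply, Fintype.sum_prod_type]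
    refine Finset.sum_congr rfl fun a _ => ?_
    rw [Fintype.sum_eq_single a]
    · simp [extendDiag, hv]
    · intro b hb
      have hne : v ≠ (a, b) := by grind
      simp [extendDiag, hb.symm, hne]
  · simp [Matrix.mul_apply, extendDiag, hv]

theorem extendDiag_mul_leg1_diagonal_mul {B C : Matrix (Fin n) (Fin n) K} {d : Fin n → K}
    (h : B * diagonal d * C = diagonal d) :
    extendDiag B * leg1 (diagonal d) * extendDiag C = leg1 (diagonal d) := by
  ext v w
  rw [mul_assoc, extendDiag_mul_apply, leg1_diagonal]
  simp only [diagonal_mul, diagonal_apply, extendDiag, of_apply, true_and]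
  by_cases hv : v.1 = v.2
  · by_cases hw : w.1 = w.2
    · have hentry := congrFun₂ h v.1 w.1
      rw [mul_assoc, Matrix.mul_apply] at hentry
      simpa [hv, hw, Prod.ext_iff, diagonal_apply] using hentry
    · have hne (a : Fin n) : (a, a) ≠ w := by grind
      have hvw : v ≠ w := by grind
      simp [hv, hw, hne, hvw]
  · simp [hv]

end ExtendDiag

section CrossingBlock

variable {n : ℕ} {K : Type*} [Field K] {q : K}

/-- The block of `R^{t₁}` on the span of the vectors `e_i ⊗ e_i`. -/
def crossingBlock (q : K) (n : ℕ) : Matrix (Fin n) (Fin n) K :=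
  of fun i j => if i = j then q else if j < i then q - q⁻¹ else 0

theorem crossingBlock_self (i : Fin n) : crossingBlock q n i i = q := by
  simp [crossingBlock]

theorem crossingBlock_of_gt {i j : Fin n} (h : j < i) : crossingBlock q n i j = q - q⁻¹ := by
  simp [crossingBlock, h, h.ne']

theorem crossingBlock_of_lt {i j : Fin n} (h : i < j) : crossingBlock q n i j = 0 := by
  simp [crossingBlock, h.ne, h.not_gt]

theorem sum_Ioo_zpow (hq : q ≠ 0) (N : ℤ) {k i : Fin n} (hki : k < i) :
    (q - q⁻¹) * ∑ a ∈ Finset.Ioo k i, q ^ (N - 2 * (a : ℤ)) =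
      q⁻¹ * q ^ (N - 2 * (k : ℤ)) - q * q ^ (N - 2 * (i : ℤ)) := by
  let f : ℕ → K := fun a => -(q * q ^ (N - 2 * (a : ℤ)))
  have hf (a : ℕ) : f (a + 1) = -(q⁻¹ * q ^ (N - 2 * (a : ℤ))) := by
    rw [neg_inj, ← zpow_one_add₀ hq, ← _root_.zpow_neg_one, ← zpow_add₀ hq]
    congr 1
    push_cast
    ring
  calc (q - q⁻¹) * ∑ a ∈ Finset.Ioo k i, q ^ (N - 2 * (a : ℤ))
      = ∑ a ∈ Finset.Ico ((k : ℕ) + 1) i, (f (a + 1) - f a) := by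
        rw [Finset.Ico_add_one_left_eq_Ioo, ← Fin.map_valEmbedding_Ioo, Finset.sum_map,
          Finset.mul_sum]
        refine Finset.sum_congr rfl fun a _ => ?_
        rw [hf, Fin.valEmbedding_apply]
        ring
    _ = f i - f (k + 1) := Finset.sum_Ico_sub f hki
    _ = _ := by
        rw [hf]
        ring

theorem crossingBlock_mul_diagonal_mul (hq : q ≠ 0) (N : ℤ) :
    crossingBlock q n * diagonal (fun i : Fin n => q ^ (N - 2 * (i : ℤ))) * crossingBlock q⁻¹ n =
      diagonal fun i : Fin n => q ^ (N - 2 * (i : ℤ)) := by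
  ext i k
  have hsupport : ∀ a ∈ Finset.univ, a ∉ Finset.Icc k i →
      crossingBlock q n i a * q ^ (N - 2 * (a : ℤ)) * crossingBlock q⁻¹ n a k = 0 := by
    intro a _ ha
    rcases lt_or_ge a k with hak | hka
    · rw [crossingBlock_of_lt hak, mul_zero]
    · have hia : i < a := by simpa [hka] using ha
      rw [crossingBlock_of_lt hia, zero_mul, zero_mul]
  simp only [Matrix.mul_apply (M := crossingBlock q n * _), mul_diagonal]
  rw [← Finset.sum_subset (Finset.subset_univ (Finset.Icc k i)) hsupport]
  rcases lt_trichotomy k i with hki | rfl | hik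
  · have hinner : ∀ a ∈ Finset.Ioo k i,
        crossingBlock q n i a * q ^ (N - 2 * (a : ℤ)) * crossingBlock q⁻¹ n a k =
          -(q - q⁻¹) * ((q - q⁻¹) * q ^ (N - 2 * (a : ℤ))) := by
      intro a ha
      rw [Finset.mem_Ioo] at ha
      rw [crossingBlock_of_gt ha.1, crossingBlock_of_gt ha.2, inv_inv]
      ring
    rw [← Finset.Ico_insert_right hki.le, ← Finset.Ioo_insert_left hki,
      Finset.sum_insert (by simp [hki.ne']), Finset.sum_insert (by simp),
      Finset.sum_congr rfl hinner, ← Finset.mul_sum, ← Finset.mul_sum, sum_Ioo_zpow hq N hki,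
      crossingBlock_self, crossingBlock_self, crossingBlock_of_gt hki, crossingBlock_of_gt hki,
      inv_inv, diagonal_apply_ne _ hki.ne']
    ring
  · rw [Finset.Icc_self, Finset.sum_singleton, crossingBlock_self, crossingBlock_self,
      diagonal_apply_eq, mul_right_comm, mul_inv_cancel₀ hq, one_mul]
  · rw [Finset.Icc_eq_empty hik.not_ge, Finset.sum_empty, diagonal_apply_ne _ hik.ne]

end CrossingBlock

section Rmat

variable {n : ℕ} {q : ℂ}

theorem Rmat_mul_apply {ι : Type*} (X : Matrix (Fin n × Fin n) ι ℂ) (v : Fin n × Fin n) (w : ι) :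
    (Rmat q n * X) v w =
      (if v.1 = v.2 then q else 1) * X v w +
        if v.1 < v.2 then (q - q⁻¹) * X v.swap w else 0 := by
  have hswap (u : Fin n × Fin n) :
      (u.1 = v.2 ∧ u.2 = v.1 ∧ v.1 < v.2) ↔ v.swap = u ∧ v.1 < v.2 := by
    simp [Prod.ext_iff, and_assoc, eq_comm]
  simp [Matrix.mul_apply, Rmat, hswap, add_mul, Finset.sum_add_distrib, ite_and]

theorem Rmat_mul_Rmat_inv (hq : q ≠ 0) : Rmat q n * Rmat q⁻¹ n = 1 := by
  ext v w
  rw [Rmat_mul_apply]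
  simp only [Rmat, Matrix.one_apply, Prod.swap, inv_inv]
  rcases lt_trichotomy v.1 v.2 with h | h | h
  · have hw : (w.1 = v.2 ∧ w.2 = v.1) ↔ (v.2, v.1) = w := by grind
    simp only [h, h.ne, h.ne', h.not_gt, hw, and_true, and_false, if_true, if_false, one_mul,
      mul_ite, mul_one, mul_zero, add_zero]
    split_ifs <;> ring
  · simp [h, hq]
  · simp [h.ne', h.not_gt]

theorem Rmat_submatrix_swap : (Rmat q n).submatrix Prod.swap Prod.swap = (Rmat q n)ᵀ := by
  ext ⟨i, j⟩ ⟨k, l⟩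
  simp only [Rmat, Matrix.submatrix_apply, Matrix.transpose_apply, Prod.swap, Prod.mk.injEq]
  grind

theorem partialTranspose₁_Rmat :
    partialTranspose₁ (Rmat q n) = extendDiag (crossingBlock q n) := by
  ext ⟨i, j⟩ ⟨k, l⟩
  simp only [partialTranspose₁, Rmat, extendDiag, crossingBlock, of_apply, Prod.mk.injEq]
  grind

theorem transpose_Dmat : (Dmat q n ℂ)ᵀ = Dmat q n ℂ := diagonal_transpose _

theorem crossingUnitary_Rmat (hq : q ≠ 0) :
    CrossingUnitary (Dmat q n ℂ) (Rmat q n) (Rmat q⁻¹ n) := by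
  rw [CrossingUnitary, transpose_Dmat, partialTranspose₁_Rmat, partialTranspose₁_Rmat]
  exact extendDiag_mul_leg1_diagonal_mul (crossingBlock_mul_diagonal_mul hq _)

theorem trq_eq_trace {A : Type*} [Ring A] [Algebra ℂ A] (X : Matrix (Fin n) (Fin n) A) :
    trq q X = ((Dmat q n ℂ).map (algebraMap ℂ A) * X).trace := by
  simp [trq, Dmat, diagonal_map]

theorem commute_trq_pow_left {A : Type*} [Ring A] [Algebra ℂ A] (hq : q ≠ 0)
    {P : (Matrix (Fin n) (Fin n) A)ˣ} {N : Matrix (Fin n) (Fin n) A}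
    (hPN : RTTRelation (Rmat q n) P.val N) (hNN : RTTRelation (Rmat q n) N N)
    (m : ℕ) (i k : Fin n) : Commute (trq q ((N * P⁻¹.val) ^ m)) (N i k) := by
  rw [trq_eq_trace]
  exact commute_trace_mul_inv_pow_left (Rmat_mul_Rmat_inv hq) (crossingUnitary_Rmat hq)
    hPN hNN m i k

theorem commute_trq_pow_right {A : Type*} [Ring A] [Algebra ℂ A] (hq : q ≠ 0)
    {P : (Matrix (Fin n) (Fin n) A)ˣ} {N : Matrix (Fin n) (Fin n) A}
    (hPP : RTTRelation (Rmat q n) P.val P.val) (hPN : RTTRelation (Rmat q n) P.val N)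
    (m : ℕ) (i k : Fin n) : Commute (trq q ((N * P⁻¹.val) ^ m)) (P.val i k) := by
  rw [trq_eq_trace]
  refine commute_trace_mul_inv_pow_right (Rmat_mul_Rmat_inv hq) ?_ hPP hPN m i k
  simpa only [transpose_Dmat, Rmat_submatrix_swap] using (crossingUnitary_Rmat hq).transpose

end Rmat

section UqGL

variable {q : ℂ} {n : ℕ}

theorem rttRelation_LM {p p' : Bool}
    (h : ∀ v w, relGL q n ((RcGL q n * leg1 (gl n p) * leg2 (gl n p')) v w)
      ((leg2 (gl n p') * leg1 (gl n p) * RcGL q n) v w)) :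
    RTTRelation (Rmat q n) (LM q n p) (LM q n p') := by
  let π := RingQuot.mkAlgHom ℂ (relGL q n)
  have map_R : (RcGL q n).map π = (Rmat q n).map (algebraMap ℂ (UqGL q n)) := by
    ext v w
    simp [RcGL]
  have map_leg1 (p : Bool) : (leg1 (gl n p)).map π = leg1 (LM q n p) := by
    ext v w
    simp only [leg1, Matrix.map_apply, apply_ite π, map_zero]
    rfl
  have map_leg2 (p : Bool) : (leg2 (gl n p)).map π = leg2 (LM q n p) := by
    ext v w
    simp only [leg2, Matrix.map_apply, apply_ite π, map_zero]
    rfl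
  have hπ : (RcGL q n * leg1 (gl n p) * leg2 (gl n p')).map π =
      (leg2 (gl n p') * leg1 (gl n p) * RcGL q n).map π := by
    ext v w
    exact RingQuot.mkAlgHom_rel ℂ (h v w)
  simpa only [RTTRelation, Matrix.map_mul, map_R, map_leg1, map_leg2] using hπ

theorem adjoin_range_lG :
    Algebra.adjoin ℂ (Set.range fun g : GenGL n => lG q n g.1 g.2.1 g.2.2) = ⊤ := by
  have hrange : (Set.range fun g : GenGL n => lG q n g.1 g.2.1 g.2.2) =
      RingQuot.mkAlgHom ℂ (relGL q n) '' Set.range (FreeAlgebra.ι ℂ) := by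
    rw [← Set.range_comp]
    rfl
  rw [hrange, ← AlgHom.map_adjoin, FreeAlgebra.adjoin_range_ι, Algebra.map_top,
    AlgHom.range_eq_top]
  exact RingQuot.mkAlgHom_surjective ℂ (relGL q n)

theorem commute_of_forall_commute_lG {z : UqGL q n} (h : ∀ p i j, Commute z (lG q n p i j))
    (x : UqGL q n) : Commute z x := by
  have hle : Algebra.adjoin ℂ (Set.range fun g : GenGL n => lG q n g.1 g.2.1 g.2.2) ≤
      Subalgebra.centralizer ℂ {z} := by
    rw [Algebra.adjoin_le_iff]
    rintro _ ⟨⟨p, i, j⟩, rfl⟩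
    exact Subalgebra.mem_centralizer_iff ℂ |>.mpr (by simpa using (h p i j).eq)
  rw [adjoin_range_lG] at hle
  exact Subalgebra.mem_centralizer_iff ℂ |>.mp (hle Algebra.mem_top) z rfl

end UqGL

theorem stmt_19_general (n : ℕ) (q : ℂ) (hq0 : q ≠ 0)
    (Lpinv : Matrix (Fin n) (Fin n) (UqGL q n))
    (hLp1 : LM q n true * Lpinv = 1) (hLp2 : Lpinv * LM q n true = 1)
    (m : ℕ) (x : UqGL q n) :
    Commute (trq q ((LM q n false * Lpinv) ^ m)) x := by
  let P : (Matrix (Fin n) (Fin n) (UqGL q n))ˣ := ⟨LM q n true, Lpinv, hLp1, hLp2⟩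
  have hPN : RTTRelation (Rmat q n) P.val (LM q n false) := rttRelation_LM relGL.rll_pm
  refine commute_of_forall_commute_lG (fun p i k => ?_) x
  cases p with
  | false => exact commute_trq_pow_left hq0 hPN (rttRelation_LM (relGL.rll false)) m i k
  | true => exact commute_trq_pow_right (P := P) hq0 (rttRelation_LM (relGL.rll true)) hPN m i k

/-- For every `m ≥ 1` the quantum Gelfand invariant
`tr_q M^m = tr(D·M^m)`, `M = L⁻(L⁺)⁻¹`, is central in `U_q(gl_n)`. -/
theorem stmt_19 (n : ℕ) (hn : 1 ≤ n) (q : ℂ) (hq0 : q ≠ 0)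
    (hq : ∀ k : ℕ, k ≠ 0 → q ^ k ≠ 1)
    (Lpinv : Matrix (Fin n) (Fin n) (UqGL q n))
    (hLp1 : LM q n true * Lpinv = 1) (hLp2 : Lpinv * LM q n true = 1)
    (m : ℕ) (hm : 1 ≤ m) (x : UqGL q n) :
    Commute (trq q ((LM q n false * Lpinv) ^ m)) x :=
  stmt_19_general n q hq0 Lpinv hLp1 hLp2 m x
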